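/- For m ≥ 1 let u^m : ℝ → ℝ be the sawtooth function with u^m(x) = 0 for x ∉ [0,1], u^m(x) = x − (i−1)/m for (i−1)/m ≤ x ≤ (2i−1)/(2m) and u^m(x) = i/m − x for (2i−1)/(2m) ≤ x ≤ i/m (i = 1,…,m). Assume κ₀ ≥ 1. Then for all m < n and every transportation plan (ψ,φ₁,φ₂) for the pair (u^m, u^n), the cost satisfies J^{(ψ,φ₁,φ₂)}(u^m, u^n) ≥ (n−m)/(8n). Consequently J(u^m, u^n) ≥ (n−m)/(8n), and for each fixed m this lower bound tends to 1/8 as n → ∞, so (u^m)_{m≥1} is not a Cauchy sequence with respect to the distance J. -/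

import Mathlib

open MeasureTheory Real

/-- The distance on `X = (ℝ² × (-π/2, π/2]) ∪ {∞}`. -/
noncomputable def dX (κ : ℝ) : Option (ℝ × ℝ × ℝ) → Option (ℝ × ℝ × ℝ) → ℝ
  | none, none => 0
  | none, some q => κ * (π / 2 + q.2.2)
  | some p, none => κ * (π / 2 + p.2.2)
  | some p, some q =>
      min (|p.1 - q.1| + |p.2.1 - q.2.1| + κ * |p.2.2 - q.2.2|)
        (κ * (π / 2 + p.2.2) + κ * (π / 2 + q.2.2))

/-- A transportation plan `(ψ, ψ', φ₁, φ₂)` between functions with derivatives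
`ux` and `vx`: `ψ` is a nondecreasing absolutely continuous surjection with a.e.
derivative `dψ ≥ 0`, `φ₁, φ₂ : ℝ → [0,1]` are simple Borel functions, and
`φ₁(x) ux(x)² = ψ'(x) φ₂(ψ(x)) vx(ψ(x))²` a.e. -/
def IsTransportPlan (ux vx ψ dψ φ₁ φ₂ : ℝ → ℝ) : Prop :=
  Monotone ψ ∧ Function.Surjective ψ ∧
  (∀ a b : ℝ, a ≤ b → ψ b - ψ a = ∫ x in a..b, dψ x) ∧
  (∀ x : ℝ, 0 ≤ dψ x) ∧
  (∀ x : ℝ, φ₁ x ∈ Set.Icc (0 : ℝ) 1) ∧ (∀ x : ℝ, φ₂ x ∈ Set.Icc (0 : ℝ) 1) ∧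
  (Set.range φ₁).Finite ∧ Measurable φ₁ ∧
  (Set.range φ₂).Finite ∧ Measurable φ₂ ∧
  (∀ᵐ x : ℝ, φ₁ x * (ux x) ^ 2 = dψ x * (φ₂ (ψ x) * (vx (ψ x)) ^ 2))

/-- The cost of a transportation plan. -/
noncomputable def planCost (κ : ℝ) (u ux v vx ψ dψ φ₁ φ₂ : ℝ → ℝ) : ℝ :=
  (∫ x : ℝ, dX κ (some (x, u x, arctan (ux x)))
      (some (ψ x, v (ψ x), arctan (vx (ψ x)))) * (φ₁ x * (ux x) ^ 2)) +
  (∫ x : ℝ, dX κ (some (x, u x, arctan (ux x))) none * ((1 - φ₁ x) * (ux x) ^ 2)) +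
  (∫ x : ℝ, dX κ (some (ψ x, v (ψ x), arctan (vx (ψ x)))) none *
      ((1 - φ₂ (ψ x)) * (vx (ψ x)) ^ 2 * dψ x))

/-- The transportation distance `J(u,v)`: infimum of costs over all plans. -/
noncomputable def Jdist (κ : ℝ) (u ux v vx : ℝ → ℝ) : ℝ :=
  sInf {c : ℝ | ∃ ψ dψ φ₁ φ₂ : ℝ → ℝ,
    IsTransportPlan ux vx ψ dψ φ₁ φ₂ ∧ planCost κ u ux v vx ψ dψ φ₁ φ₂ = c}

/-- The sawtooth `u^m`, supported on `[0,1]`, with `m` teeth of height `1/(2m)`: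
`u^m(x) = dist(mx, ℤ)/m` on `[0,1]`. -/
noncomputable def sawtooth (m : ℕ) (x : ℝ) : ℝ :=
  if 0 ≤ x ∧ x ≤ 1 then |(m : ℝ) * x - (round ((m : ℝ) * x) : ℤ)| / m else 0

/-- Its derivative: `+1` on the rising parts, `-1` on the falling parts, `0` off `[0,1]`. -/
noncomputable def sawtooth' (m : ℕ) (x : ℝ) : ℝ :=
  if 0 ≤ x ∧ x ≤ 1 then (if Int.fract ((m : ℝ) * x) < 1 / 2 then 1 else -1) else 0

/-!
A plan pays at least `κ₀π/4` per unit of mass that is moved between points of opposite slope or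
created out of `∞`. Over each of the `n` teeth of `u^n`, either no point of slope `1` of `u^m` is
mapped to the rising half, or, since `ψ` is monotone and unless `u^m` has a peak in the preimage of
the tooth, no point of slope `-1` is mapped to the falling half. The preimages of the teeth are
disjoint and `u^m` has `m` peaks, so at least `n - m` teeth have a half of length `1/(2n)` that
is paid for in full, which costs `κ₀π(n - m)/(8n)`.

The preimages are measured by `ψ' dx`, whose image under `ψ` is Lebesgue measure.
-/

section TransportLowerBound
open Set Filter Topology

lemma card_le_card_filter_disjoint_add_card {ι α : Type*} (s : Finset ι) (A : ι → Set α)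
    (hA : (s : Set ι).PairwiseDisjoint A) (P : Finset α)
    [DecidablePred fun i => Disjoint (A i) (P : Set α)] :
    s.card ≤ (s.filter fun i => Disjoint (A i) (P : Set α)).card + P.card := by
  rw [← s.card_filter_add_card_filter_not fun i => Disjoint (A i) (P : Set α)]
  gcongr
  refine Finset.card_le_card_of_forall_subsingleton (fun i p => p ∈ A i) (fun i hi => ?_) ?_
  · obtain ⟨p, hpA, hpP⟩ := not_disjoint_iff.1 (Finset.mem_filter.1 hi).2
    exact ⟨p, hpP, hpA⟩
  · rintro p - i ⟨hi, hpi⟩ j ⟨hj, hpj⟩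
    exact hA.elim_set (Finset.mem_filter.1 hi).1 (Finset.mem_filter.1 hj).1 p hpi hpj

lemma card_sub_card_mul_le_integral {ι α : Type*} [MeasurableSpace α] {μ : Measure α}
    {f : α → ℝ} (hf : Integrable f μ) (hf0 : ∀ x, 0 ≤ f x) {s : Finset ι} {A : ι → Set α}
    (hA : (s : Set ι).PairwiseDisjoint A) (hAm : ∀ i ∈ s, MeasurableSet (A i)) (P : Finset α)
    {c : ℝ} (hc : 0 ≤ c) (hcA : ∀ i ∈ s, Disjoint (A i) (P : Set α) → c ≤ ∫ x in A i, f x ∂μ) :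
    ((s.card : ℝ) - P.card) * c ≤ ∫ x, f x ∂μ := by
  classical
  set t := s.filter fun i => Disjoint (A i) (P : Set α)
  have hts : t ⊆ s := Finset.filter_subset _ _
  have hcard : (s.card : ℝ) ≤ t.card + P.card :=
    mod_cast card_le_card_filter_disjoint_add_card s A hA P
  calc ((s.card : ℝ) - P.card) * c ≤ t.card * c := by gcongr; linarith
    _ = ∑ _i ∈ t, c := by rw [Finset.sum_const, nsmul_eq_mul]
    _ ≤ ∑ i ∈ t, ∫ x in A i, f x ∂μ := Finset.sum_le_sum fun i hi =>
        hcA i (hts hi) (Finset.mem_filter.1 hi).2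
    _ = ∫ x in ⋃ i ∈ t, A i, f x ∂μ := (integral_biUnion_finset t (fun i hi => hAm i (hts hi))
        (hA.subset hts) fun _ _ => hf.integrableOn).symm
    _ ≤ ∫ x, f x ∂μ := setIntegral_le_integral hf (ae_of_all _ hf0)

/-! ### Monotone changes of variables -/

lemma exists_preimage_Iic_eq_Iic {α β : Type*} [ConditionallyCompleteLinearOrder α]
    [LinearOrder β] [DenselyOrdered β] [NoMaxOrder β] {f : α → β} (hf : Monotone f)
    (hsurj : Function.Surjective f) (y : β) : ∃ c, f c = y ∧ f ⁻¹' Iic y = Iic c := by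
  have mem_upperBounds {w : α} (hw : y < f w) : w ∈ upperBounds (f ⁻¹' Iic y) :=
    fun x hx => (hf.reflect_lt (hx.trans_lt hw)).le
  have hbdd : BddAbove (f ⁻¹' Iic y) := by
    obtain ⟨z, hz⟩ := exists_gt y
    obtain ⟨w, rfl⟩ := hsurj z
    exact ⟨w, mem_upperBounds hz⟩
  obtain ⟨x, rfl⟩ := hsurj y
  have hle : f (sSup (f ⁻¹' Iic (f x))) ≤ f x := by
    by_contra! hlt
    obtain ⟨z, hz, hz'⟩ := exists_between hlt
    obtain ⟨w, rfl⟩ := hsurj z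
    exact (hf.reflect_lt hz').not_ge (csSup_le ⟨x, le_rfl⟩ (mem_upperBounds hz))
  exact ⟨_, hle.antisymm (hf (le_csSup hbdd le_rfl)),
    Subset.antisymm (fun _ hz => le_csSup hbdd hz) fun _ hz => (hf hz).trans hle⟩

/-- `ψ` is a nondecreasing surjection of the line that is the integral of the nonnegative
density `dψ`: the part of a transportation plan that moves points. -/
structure IsTransportMap (ψ dψ : ℝ → ℝ) : Prop where
  monotone : Monotone ψ
  surjective : Function.Surjective ψ
  sub_eq_integral : ∀ a b : ℝ, a ≤ b → ψ b - ψ a = ∫ x in a..b, dψ x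
  nonneg : ∀ x : ℝ, 0 ≤ dψ x

namespace IsTransportMap

variable {ψ dψ : ℝ → ℝ}

lemma integrableOn_Ioc (h : IsTransportMap ψ dψ) (a b : ℝ) : IntegrableOn dψ (Ioc a b) := by
  obtain ⟨c, hc⟩ := h.surjective (max (ψ a) (ψ b) + 1)
  have hac : a ≤ c := (h.monotone.reflect_lt (by linarith [le_max_left (ψ a) (ψ b)])).le
  have hbc : b ≤ c := (h.monotone.reflect_lt (by linarith [le_max_right (ψ a) (ψ b)])).le
  -- The integral over `a..c` is positive, so it is not the junk value of a divergent one.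
  have hne : ∫ x in a..c, dψ x ≠ 0 := by
    rw [← h.sub_eq_integral a c hac, hc]
    linarith [le_max_left (ψ a) (ψ b)]
  have hint : IntervalIntegrable dψ volume a c := by
    contrapose! hne
    exact intervalIntegral.integral_undef hne
  exact hint.1.mono_set (Ioc_subset_Ioc_right hbc)

lemma aemeasurable (h : IsTransportMap ψ dψ) : AEMeasurable dψ := by
  have hloc : LocallyIntegrable dψ := fun x =>
    ⟨Ioc (x - 1) (x + 1), Ioc_mem_nhds (by linarith) (by linarith), h.integrableOn_Ioc _ _⟩
  exact hloc.aestronglyMeasurable.aemeasurable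

lemma withDensity_Ioc (h : IsTransportMap ψ dψ) {a b : ℝ} (hab : a ≤ b) :
    volume.withDensity (fun x => ENNReal.ofReal (dψ x)) (Ioc a b)
      = ENNReal.ofReal (ψ b - ψ a) := by
  rw [withDensity_apply _ measurableSet_Ioc, h.sub_eq_integral a b hab,
    intervalIntegral.integral_of_le hab,
    ofReal_integral_eq_lintegral_ofReal (h.integrableOn_Ioc a b) (ae_of_all _ h.nonneg)]

lemma map_withDensity (h : IsTransportMap ψ dψ) :
    (volume.withDensity fun x => ENNReal.ofReal (dψ x)).map ψ = volume := by
  refine (Measure.ext_of_Ioc _ _ fun a b hab => ?_).symm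
  obtain ⟨c, rfl, hc⟩ := exists_preimage_Iic_eq_Iic h.monotone h.surjective a
  obtain ⟨d, rfl, hd⟩ := exists_preimage_Iic_eq_Iic h.monotone h.surjective b
  have hpre : ψ ⁻¹' Ioc (ψ c) (ψ d) = Ioc c d := by
    rw [← Iic_sdiff_Iic, preimage_sdiff, hc, hd, Iic_sdiff_Iic]
  rw [Measure.map_apply h.monotone.measurable measurableSet_Ioc, hpre,
    h.withDensity_Ioc (h.monotone.reflect_lt hab).le, Real.volume_Ioc]

lemma integrable_comp_mul (h : IsTransportMap ψ dψ) {f : ℝ → ℝ} (hf : Integrable f) :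
    Integrable fun x => f (ψ x) * dψ x := by
  rw [← h.map_withDensity] at hf
  have hcomp := hf.comp_measurable h.monotone.measurable
  refine ((integrable_withDensity_iff_integrable_smul₀ h.aemeasurable.real_toNNReal).1
    hcomp).congr (ae_of_all _ fun x => ?_)
  simp only [Function.comp_apply, NNReal.smul_def, Real.coe_toNNReal _ (h.nonneg x), smul_eq_mul,
    mul_comm]

lemma integrableOn_preimage (h : IsTransportMap ψ dψ) {S : Set ℝ} (hS : MeasurableSet S)
    (hS_fin : volume S ≠ ⊤) : IntegrableOn dψ (ψ ⁻¹' S) := by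
  have hind := h.integrable_comp_mul ((integrable_indicator_iff hS).2
    (integrableOn_const (C := (1 : ℝ)) hS_fin))
  rw [← integrable_indicator_iff (h.monotone.measurable hS)]
  refine hind.congr (ae_of_all _ fun x => ?_)
  by_cases hx : ψ x ∈ S <;> simp [hx]

lemma setIntegral_preimage (h : IsTransportMap ψ dψ) {S : Set ℝ} (hS : MeasurableSet S) :
    ∫ x in ψ ⁻¹' S, dψ x = volume.real S := by
  have hmeas : MeasurableSet (ψ ⁻¹' S) := h.monotone.measurable hS
  rw [integral_eq_lintegral_of_nonneg_ae (ae_of_all _ h.nonneg)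
      h.aemeasurable.restrict.aestronglyMeasurable,
    ← withDensity_apply _ hmeas, ← Measure.map_apply h.monotone.measurable hS,
    h.map_withDensity, Measure.real]

end IsTransportMap

/-! ### The distance on the phase space -/

section Distance

variable {κ : ℝ}

lemma dX_some_none_mem_Icc (hκ : 0 ≤ κ) {p : ℝ × ℝ × ℝ}
    (hp : p.2.2 ∈ Icc (-(π / 2)) (π / 2)) : dX κ (some p) none ∈ Icc 0 (κ * π) :=
  ⟨mul_nonneg hκ (by linarith [hp.1]), mul_le_mul_of_nonneg_left (by linarith [hp.2]) hκ⟩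

lemma mul_min_le_dX (hκ : 0 ≤ κ) (p q : ℝ × ℝ × ℝ) :
    κ * min |p.2.2 - q.2.2| (π + p.2.2 + q.2.2) ≤ dX κ (some p) (some q) := by
  rw [mul_min_of_nonneg _ _ hκ]
  exact min_le_min (le_add_of_nonneg_left (by positivity)) (by linarith)

lemma dX_some_some_mem_Icc (hκ : 0 ≤ κ) {p q : ℝ × ℝ × ℝ}
    (hp : p.2.2 ∈ Icc (-(π / 2)) (π / 2)) (hq : q.2.2 ∈ Icc (-(π / 2)) (π / 2)) :
    dX κ (some p) (some q) ∈ Icc 0 (κ * π + κ * π) := by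
  have hp' := dX_some_none_mem_Icc hκ hp
  have hq' := dX_some_none_mem_Icc hκ hq
  exact ⟨le_min (by positivity) (add_nonneg hp'.1 hq'.1),
    (min_le_right _ _).trans (add_le_add hp'.2 hq'.2)⟩

lemma measurable_dX_some_none {α : Type*} [MeasurableSpace α] {p : α → ℝ × ℝ × ℝ}
    (hp : Measurable p) : Measurable fun a => dX κ (some (p a)) none := by
  unfold dX
  fun_prop

lemma measurable_dX_some_some {α : Type*} [MeasurableSpace α] {p q : α → ℝ × ℝ × ℝ}
    (hp : Measurable p) (hq : Measurable q) :
    Measurable fun a => dX κ (some (p a)) (some (q a)) := by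
  unfold dX
  fun_prop

/-- The lift `x ↦ (x, u(x), arctan u_x(x))` of the graph of `u` to the finite part of `X`. -/
noncomputable def graphLift (u ux : ℝ → ℝ) (x : ℝ) : ℝ × ℝ × ℝ := (x, u x, arctan (ux x))

variable {u ux v vx : ℝ → ℝ}

lemma measurable_graphLift (hu : Measurable u) (hux : Measurable ux) :
    Measurable (graphLift u ux) := by
  unfold graphLift
  fun_prop

lemma graphLift_angle_mem_Icc (u ux : ℝ → ℝ) (x : ℝ) :
    (graphLift u ux x).2.2 ∈ Icc (-(π / 2)) (π / 2) :=
  ⟨(neg_pi_div_two_lt_arctan _).le, (arctan_lt_pi_div_two _).le⟩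

lemma le_dX_graphLift_none (hκ : 0 ≤ κ) {y : ℝ} (hy : -1 ≤ vx y) :
    κ * (π / 4) ≤ dX κ (some (graphLift v vx y)) none := by
  have hangle : -(π / 4) ≤ arctan (vx y) := by
    rw [← arctan_one, ← arctan_neg]
    exact arctan_mono hy
  exact mul_le_mul_of_nonneg_left (by simp only [graphLift]; linarith) hκ

lemma le_dX_graphLift_of_slope_ne (hκ : 0 ≤ κ) {x y : ℝ} (hx : |ux x| = 1) (hy : |vx y| = 1)
    (hne : ux x ≠ vx y) :
    κ * (π / 2) ≤ dX κ (some (graphLift u ux x)) (some (graphLift v vx y)) := by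
  refine le_trans (mul_le_mul_of_nonneg_left (le_min ?_ ?_) hκ) (mul_min_le_dX hκ _ _) <;>
    rcases eq_or_eq_neg_of_abs_eq hx with hx | hx <;>
    rcases eq_or_eq_neg_of_abs_eq hy with hy | hy <;>
    simp only [graphLift, hx, hy, arctan_neg, arctan_one, ne_eq, not_true_eq_false] at hne ⊢
  · exact le_abs.2 (Or.inl (by linarith))
  · exact le_abs.2 (Or.inr (by linarith))
  all_goals linarith [pi_pos]

end Distance

/-! ### The cost of a plan as the integral of a density -/

/-- The integrand of `planCost`: the costs at `x` of moving mass, of destroying mass of `u`, and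
of creating mass of `v`, gathered under one integral sign. -/
noncomputable def planCostDensity (κ : ℝ) (u ux v vx ψ dψ φ₁ φ₂ : ℝ → ℝ) (x : ℝ) : ℝ :=
  dX κ (some (graphLift u ux x)) (some (graphLift v vx (ψ x))) * (φ₁ x * (ux x) ^ 2) +
  dX κ (some (graphLift u ux x)) none * ((1 - φ₁ x) * (ux x) ^ 2) +
  dX κ (some (graphLift v vx (ψ x))) none * ((1 - φ₂ (ψ x)) * (vx (ψ x)) ^ 2 * dψ x)

lemma integrable_mul_mul_of_mem_Icc {α : Type*} [MeasurableSpace α] {μ : Measure α}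
    {d φ f : α → ℝ} {C : ℝ} (hd : Measurable d) (hdC : ∀ x, d x ∈ Icc 0 C)
    (hφ : Measurable φ) (hφ1 : ∀ x, φ x ∈ Icc (0 : ℝ) 1) (hf : Integrable f μ) :
    Integrable (fun x => d x * (φ x * f x)) μ := by
  have hφf : Integrable (fun x => φ x * f x) μ :=
    hf.bdd_mul (c := 1) hφ.aestronglyMeasurable
      (ae_of_all _ fun x => by rw [norm_of_nonneg (hφ1 x).1]; exact (hφ1 x).2)
  exact hφf.bdd_mul (c := C) hd.aestronglyMeasurable
    (ae_of_all _ fun x => by rw [norm_of_nonneg (hdC x).1]; exact (hdC x).2)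

/-- `P` contains the peaks of a function with derivative `ux`: between a point of slope `1` and a
point of slope `-1` to its right there is a point of `P`. Only the slopes enter, so that `P` may be
any set separating rises from subsequent falls. -/
def IsPeakSet (ux : ℝ → ℝ) (P : Set ℝ) : Prop :=
  ∀ x y : ℝ, x ≤ y → ux x = 1 → ux y = -1 → ∃ p ∈ P, p ∈ Icc x y

namespace IsTransportPlan

variable {κ : ℝ} {u ux v vx ψ dψ φ₁ φ₂ : ℝ → ℝ}

lemma isTransportMap (h : IsTransportPlan ux vx ψ dψ φ₁ φ₂) : IsTransportMap ψ dψ :=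
  ⟨h.1, h.2.1, h.2.2.1, h.2.2.2.1⟩

lemma left_mem_Icc (h : IsTransportPlan ux vx ψ dψ φ₁ φ₂) (x : ℝ) : φ₁ x ∈ Icc (0 : ℝ) 1 :=
  h.2.2.2.2.1 x

lemma right_mem_Icc (h : IsTransportPlan ux vx ψ dψ φ₁ φ₂) (y : ℝ) : φ₂ y ∈ Icc (0 : ℝ) 1 :=
  h.2.2.2.2.2.1 y

lemma measurable_left (h : IsTransportPlan ux vx ψ dψ φ₁ φ₂) : Measurable φ₁ :=
  h.2.2.2.2.2.2.2.1

lemma measurable_right (h : IsTransportPlan ux vx ψ dψ φ₁ φ₂) : Measurable φ₂ :=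
  h.2.2.2.2.2.2.2.2.2.1

lemma ae_balance (h : IsTransportPlan ux vx ψ dψ φ₁ φ₂) :
    ∀ᵐ x : ℝ, φ₁ x * (ux x) ^ 2 = dψ x * (φ₂ (ψ x) * (vx (ψ x)) ^ 2) :=
  h.2.2.2.2.2.2.2.2.2.2

lemma id_zero (ux vx : ℝ → ℝ) : IsTransportPlan ux vx id (fun _ => 1) 0 0 := by
  refine ⟨monotone_id, Function.surjective_id, ?_, ?_, ?_, ?_, ?_, ?_, ?_, ?_, ?_⟩ <;>
    simp [measurable_zero]

lemma integrable_and_planCost_eq (h : IsTransportPlan ux vx ψ dψ φ₁ φ₂) (hκ : 0 ≤ κ)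
    (hu : Measurable u) (hux : Measurable ux) (hux2 : Integrable fun x => ux x ^ 2)
    (hv : Measurable v) (hvx : Measurable vx) (hvx2 : Integrable fun x => vx x ^ 2) :
    Integrable (planCostDensity κ u ux v vx ψ dψ φ₁ φ₂) ∧
      planCost κ u ux v vx ψ dψ φ₁ φ₂ = ∫ x, planCostDensity κ u ux v vx ψ dψ φ₁ φ₂ x := by
  have hψ := h.isTransportMap.monotone.measurable
  have hp := measurable_graphLift hu hux
  have hq := (measurable_graphLift hv hvx).comp hψ
  have hp_mem := graphLift_angle_mem_Icc u ux
  have hq_mem := fun x => graphLift_angle_mem_Icc v vx (ψ x)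
  have hmove := integrable_mul_mul_of_mem_Icc (measurable_dX_some_some (κ := κ) hp hq)
    (fun x => dX_some_some_mem_Icc hκ (hp_mem x) (hq_mem x)) h.measurable_left h.left_mem_Icc hux2
  have hdestroy := integrable_mul_mul_of_mem_Icc (measurable_dX_some_none (κ := κ) hp)
    (fun x => dX_some_none_mem_Icc hκ (hp_mem x)) (h.measurable_left.const_sub 1)
    (fun x => Icc.mem_iff_one_sub_mem.1 (h.left_mem_Icc x)) hux2
  have hcreate := integrable_mul_mul_of_mem_Icc (measurable_dX_some_none (κ := κ) hq)
    (fun x => dX_some_none_mem_Icc hκ (hq_mem x)) ((h.measurable_right.comp hψ).const_sub 1)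
    (fun x => Icc.mem_iff_one_sub_mem.1 (h.right_mem_Icc (ψ x)))
    (h.isTransportMap.integrable_comp_mul hvx2)
  simp only [Function.comp_apply, ← mul_assoc] at hcreate hmove hdestroy
  unfold planCostDensity planCost
  simp only [← mul_assoc]
  exact ⟨(hmove.add hdestroy).add hcreate,
    ((integral_add (hmove.add hdestroy) hcreate).trans
      (congrArg (· + _) (integral_add hmove hdestroy))).symm⟩

lemma planCostDensity_nonneg (h : IsTransportPlan ux vx ψ dψ φ₁ φ₂) (hκ : 0 ≤ κ) (x : ℝ) :
    0 ≤ planCostDensity κ u ux v vx ψ dψ φ₁ φ₂ x := by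
  have hp := graphLift_angle_mem_Icc u ux x
  have hq := graphLift_angle_mem_Icc v vx (ψ x)
  have hφ₁ := h.left_mem_Icc x
  have hφ₂ := h.right_mem_Icc (ψ x)
  exact add_nonneg (add_nonneg
    (mul_nonneg (dX_some_some_mem_Icc hκ hp hq).1 (mul_nonneg hφ₁.1 (sq_nonneg _)))
    (mul_nonneg (dX_some_none_mem_Icc hκ hp).1 (mul_nonneg (sub_nonneg.2 hφ₁.2) (sq_nonneg _))))
    (mul_nonneg (dX_some_none_mem_Icc hκ hq).1
      (mul_nonneg (mul_nonneg (sub_nonneg.2 hφ₂.2) (sq_nonneg _)) (h.isTransportMap.nonneg x)))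

/-- The mass `v_x² dψ` arriving at `ψ x` either comes from `x`, where `u_x ≠ 0`, or from `∞`. -/
lemma mul_le_planCostDensity (h : IsTransportPlan ux vx ψ dψ φ₁ φ₂) (hκ : 0 ≤ κ) {x c : ℝ}
    (hbal : φ₁ x * (ux x) ^ 2 = dψ x * (φ₂ (ψ x) * (vx (ψ x)) ^ 2))
    (hmove : ux x ≠ 0 → c ≤ dX κ (some (graphLift u ux x)) (some (graphLift v vx (ψ x))))
    (hcreate : c ≤ dX κ (some (graphLift v vx (ψ x))) none) :
    c * ((vx (ψ x)) ^ 2 * dψ x) ≤ planCostDensity κ u ux v vx ψ dψ φ₁ φ₂ x := by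
  have hφ₁ := h.left_mem_Icc x
  have hmoved : c * (φ₁ x * (ux x) ^ 2) ≤
      dX κ (some (graphLift u ux x)) (some (graphLift v vx (ψ x))) * (φ₁ x * (ux x) ^ 2) := by
    by_cases hx : ux x = 0
    · simp [hx]
    · exact mul_le_mul_of_nonneg_right (hmove hx) (mul_nonneg hφ₁.1 (sq_nonneg _))
  have hdestroyed : 0 ≤ dX κ (some (graphLift u ux x)) none * ((1 - φ₁ x) * (ux x) ^ 2) :=
    mul_nonneg (dX_some_none_mem_Icc hκ (graphLift_angle_mem_Icc u ux x)).1
      (mul_nonneg (sub_nonneg.2 hφ₁.2) (sq_nonneg _))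
  have hcreated : c * ((1 - φ₂ (ψ x)) * (vx (ψ x)) ^ 2 * dψ x) ≤
      dX κ (some (graphLift v vx (ψ x))) none * ((1 - φ₂ (ψ x)) * (vx (ψ x)) ^ 2 * dψ x) :=
    mul_le_mul_of_nonneg_right hcreate (mul_nonneg (mul_nonneg
      (sub_nonneg.2 (h.right_mem_Icc (ψ x)).2) (sq_nonneg _)) (h.isTransportMap.nonneg x))
  calc c * ((vx (ψ x)) ^ 2 * dψ x)
      = c * (φ₁ x * (ux x) ^ 2) + 0 + c * ((1 - φ₂ (ψ x)) * (vx (ψ x)) ^ 2 * dψ x) := by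
        rw [hbal]; ring
    _ ≤ planCostDensity κ u ux v vx ψ dψ φ₁ φ₂ x :=
        add_le_add (add_le_add hmoved hdestroyed) hcreated

/-! ### Slope mismatches -/

lemma mul_volume_le_setIntegral_of_slope_ne (h : IsTransportPlan ux vx ψ dψ φ₁ φ₂) (hκ : 0 ≤ κ)
    (hF : Integrable (planCostDensity κ u ux v vx ψ dψ φ₁ φ₂))
    (hslope : ∀ x, ux x = 0 ∨ |ux x| = 1) {S : Set ℝ} (hS : MeasurableSet S)
    (hS_fin : volume S ≠ ⊤) (hvS : ∀ y ∈ S, |vx y| = 1) (hne : ∀ x ∈ ψ ⁻¹' S, ux x ≠ vx (ψ x)) :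
    κ * (π / 4) * volume.real S ≤
      ∫ x in ψ ⁻¹' S, planCostDensity κ u ux v vx ψ dψ φ₁ φ₂ x := by
  have hψ := h.isTransportMap
  rw [← hψ.setIntegral_preimage hS, ← integral_const_mul]
  refine setIntegral_mono_on_ae ((hψ.integrableOn_preimage hS hS_fin).const_mul _)
    hF.integrableOn (hψ.monotone.measurable hS) ?_
  filter_upwards [h.ae_balance] with x hbal hx
  have hvx : |vx (ψ x)| = 1 := hvS _ hx
  have hmove (hux : ux x ≠ 0) :
      κ * (π / 4) ≤ dX κ (some (graphLift u ux x)) (some (graphLift v vx (ψ x))) :=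
    le_trans (by gcongr; norm_num)
      (le_dX_graphLift_of_slope_ne hκ ((hslope x).resolve_left hux) hvx (hne x hx))
  have hcreate : κ * (π / 4) ≤ dX κ (some (graphLift v vx (ψ x))) none :=
    le_dX_graphLift_none hκ (abs_le.1 hvx.le).1
  calc κ * (π / 4) * dψ x = κ * (π / 4) * ((vx (ψ x)) ^ 2 * dψ x) := by
        rw [← sq_abs, hvx, one_pow, one_mul]
    _ ≤ _ := h.mul_le_planCostDensity hκ hbal hmove hcreate

lemma mul_min_le_setIntegral_tooth (h : IsTransportPlan ux vx ψ dψ φ₁ φ₂) (hκ : 0 ≤ κ)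
    (hF : Integrable (planCostDensity κ u ux v vx ψ dψ φ₁ φ₂))
    (hslope : ∀ x, ux x = 0 ∨ |ux x| = 1) {P : Set ℝ} (hP : IsPeakSet ux P) {a b c : ℝ}
    (hab : a ≤ b) (hbc : b ≤ c) (hrise : ∀ y ∈ Ioo a b, vx y = 1)
    (hfall : ∀ y ∈ Ioo b c, vx y = -1) (hdisj : Disjoint (ψ ⁻¹' Ioo a c) P) :
    κ * (π / 4) * min (b - a) (c - b) ≤
      ∫ x in ψ ⁻¹' Ioo a c, planCostDensity κ u ux v vx ψ dψ φ₁ φ₂ x := by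
  have hmono := h.isTransportMap.monotone
  have hsub {S : Set ℝ} (hS : S ⊆ Ioo a c) :
      ∫ x in ψ ⁻¹' S, planCostDensity κ u ux v vx ψ dψ φ₁ φ₂ x ≤
        ∫ x in ψ ⁻¹' Ioo a c, planCostDensity κ u ux v vx ψ dψ φ₁ φ₂ x :=
    setIntegral_mono_set hF.integrableOn (ae_of_all _ (h.planCostDensity_nonneg hκ))
      (ae_of_all _ (preimage_mono hS))
  by_cases hne_rise : ∀ x ∈ ψ ⁻¹' Ioo a b, ux x ≠ 1
  · calc κ * (π / 4) * min (b - a) (c - b) ≤ κ * (π / 4) * volume.real (Ioo a b) := by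
          rw [Real.volume_real_Ioo_of_le hab]
          gcongr
          exact min_le_left _ _
      _ ≤ _ := h.mul_volume_le_setIntegral_of_slope_ne hκ hF hslope measurableSet_Ioo (by simp)
          (fun y hy => by simp [hrise y hy]) fun x hx => by rw [hrise _ hx]; exact hne_rise x hx
      _ ≤ _ := hsub (Ioo_subset_Ioo_right hbc)
  · have hne_fall : ∀ y ∈ ψ ⁻¹' Ioo b c, ux y ≠ -1 := by
      intro y hy huy
      push Not at hne_rise
      obtain ⟨x, hx, hux⟩ := hne_rise
      obtain ⟨p, hpP, hxp, hpy⟩ :=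
        hP x y (hmono.reflect_lt (hx.2.trans hy.1)).le hux huy
      exact disjoint_left.1 hdisj ⟨hx.1.trans_le (hmono hxp), (hmono hpy).trans_lt hy.2⟩ hpP
    calc κ * (π / 4) * min (b - a) (c - b) ≤ κ * (π / 4) * volume.real (Ioo b c) := by
          rw [Real.volume_real_Ioo_of_le hbc]
          gcongr
          exact min_le_right _ _
      _ ≤ _ := h.mul_volume_le_setIntegral_of_slope_ne hκ hF hslope measurableSet_Ioo (by simp)
          (fun y hy => by simp [hfall y hy]) fun x hx => by rw [hfall _ hx]; exact hne_fall x hx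
      _ ≤ _ := hsub (Ioo_subset_Ioo_left hab)

end IsTransportPlan

/-! ### Sawtooth functions -/

lemma sawtooth'_of_notMem_Icc (m : ℕ) {x : ℝ} (hx : x ∉ Icc (0 : ℝ) 1) : sawtooth' m x = 0 :=
  if_neg hx

lemma sawtooth'_eq_one_iff {m : ℕ} {x : ℝ} :
    sawtooth' m x = 1 ↔ x ∈ Icc (0 : ℝ) 1 ∧ Int.fract ((m : ℝ) * x) < 1 / 2 := by
  unfold sawtooth'
  split_ifs with hx hfract
  · exact iff_of_true rfl ⟨hx, hfract⟩
  · exact iff_of_false (by norm_num) fun h => hfract h.2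
  · exact iff_of_false zero_ne_one fun h => hx h.1

lemma sawtooth'_eq_neg_one_iff {m : ℕ} {x : ℝ} :
    sawtooth' m x = -1 ↔ x ∈ Icc (0 : ℝ) 1 ∧ 1 / 2 ≤ Int.fract ((m : ℝ) * x) := by
  unfold sawtooth'
  split_ifs with hx hfract
  · exact iff_of_false (by norm_num) fun h => h.2.not_gt hfract
  · exact iff_of_true rfl ⟨hx, not_lt.1 hfract⟩
  · exact iff_of_false (by norm_num) fun h => hx h.1

lemma sawtooth'_eq_zero_or_abs_eq_one (m : ℕ) (x : ℝ) :
    sawtooth' m x = 0 ∨ |sawtooth' m x| = 1 := by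
  unfold sawtooth'
  split_ifs <;> simp

lemma measurable_sawtooth' (m : ℕ) : Measurable (sawtooth' m) :=
  Measurable.ite measurableSet_Icc (Measurable.ite (measurableSet_lt
    (measurable_fract.comp (measurable_const_mul _)) measurable_const) measurable_const
      measurable_const) measurable_const

lemma measurable_sawtooth (m : ℕ) : Measurable (sawtooth m) := by
  have hfract : Measurable fun x : ℝ => Int.fract ((m : ℝ) * x) :=
    measurable_fract.comp (measurable_const_mul _)
  unfold sawtooth
  simp only [abs_sub_round_eq_min]
  exact Measurable.ite measurableSet_Icc
    ((hfract.min (hfract.const_sub 1)).div_const _) measurable_const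

lemma integrable_sq_sawtooth' (m : ℕ) : Integrable fun x => sawtooth' m x ^ 2 := by
  have hindicator : (fun x => sawtooth' m x ^ 2) = (Icc (0 : ℝ) 1).indicator 1 := by
    funext x
    by_cases hx : x ∈ Icc (0 : ℝ) 1
    · have hx' : 0 ≤ x ∧ x ≤ 1 := hx
      simp only [sawtooth', if_pos hx', indicator_of_mem hx, Pi.one_apply]
      split_ifs <;> norm_num
    · simp [sawtooth'_of_notMem_Icc m hx, indicator_of_notMem hx]
  rw [hindicator, integrable_indicator_iff measurableSet_Icc]
  exact integrableOn_const (by simp)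

/-- The abscissae `(2k + 1)/(2m)`, `k < m`, of the peaks of the sawtooth `u^m`. -/
noncomputable def sawtoothPeaks (m : ℕ) : Finset ℝ :=
  (Finset.range m).image fun k : ℕ => ((k : ℝ) + 1 / 2) / m

lemma card_sawtoothPeaks_le (m : ℕ) : (sawtoothPeaks m).card ≤ m :=
  Finset.card_image_le.trans_eq (Finset.card_range m)

lemma isPeakSet_sawtoothPeaks (m : ℕ) : IsPeakSet (sawtooth' m) (sawtoothPeaks m) := by
  intro x y hxy hx hy
  obtain ⟨-, hx_fract⟩ := sawtooth'_eq_one_iff.1 hx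
  obtain ⟨⟨hy0, hy1⟩, hy_fract⟩ := sawtooth'_eq_neg_one_iff.1 hy
  have hm : (0 : ℝ) ≤ m := m.cast_nonneg
  have hmy : 0 ≤ (m : ℝ) * y := mul_nonneg hm hy0
  have hmxy : (m : ℝ) * x ≤ m * y := mul_le_mul_of_nonneg_left hxy hm
  set k := ⌊(m : ℝ) * y⌋₊
  have hk_floor : ⌊(m : ℝ) * y⌋ = (k : ℤ) := (Int.natCast_floor_eq_floor hmy).symm
  have hk_le : (k : ℝ) + 1 / 2 ≤ m * y := by
    rw [Int.fract, hk_floor, Int.cast_natCast] at hy_fract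
    linarith
  have hkm : (k : ℝ) < m := by nlinarith
  have hm_pos : (0 : ℝ) < m := k.cast_nonneg.trans_lt hkm
  have hx_le : (m : ℝ) * x ≤ k + 1 / 2 := by
    by_contra! hlt
    have hfloor : ⌊(m : ℝ) * x⌋ = (k : ℤ) := by
      rw [Int.floor_eq_iff, Int.cast_natCast]
      exact ⟨by linarith, hmxy.trans_lt (Nat.lt_floor_add_one _)⟩
    rw [Int.fract, hfloor, Int.cast_natCast] at hx_fract
    linarith
  refine ⟨(k + 1 / 2) / m, Finset.mem_coe.2 (Finset.mem_image_of_mem _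
    (Finset.mem_range.2 (mod_cast hkm))), ?_, ?_⟩
  · rwa [le_div_iff₀' hm_pos]
  · rwa [div_le_iff₀' hm_pos]

lemma mem_Icc_and_fract_of_mem_Ico {n i : ℕ} (hi : i < n) {y : ℝ}
    (hy : (n : ℝ) * y ∈ Ico (i : ℝ) (i + 1)) :
    y ∈ Icc (0 : ℝ) 1 ∧ Int.fract ((n : ℝ) * y) = n * y - i := by
  have hn : (0 : ℝ) < n := mod_cast i.zero_le.trans_lt hi
  have hin : (i : ℝ) + 1 ≤ n := mod_cast hi
  have hi0 : (0 : ℝ) ≤ i := i.cast_nonneg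
  have hfloor : ⌊(n : ℝ) * y⌋ = (i : ℤ) := Int.floor_eq_iff.2 (mod_cast hy)
  refine ⟨⟨?_, ?_⟩, by rw [Int.fract, hfloor, Int.cast_natCast]⟩
  · exact nonneg_of_mul_nonneg_right (hi0.trans hy.1) hn
  · exact le_of_mul_le_mul_left (by linarith [hy.2]) hn

lemma sawtooth'_eq_one_of_mem_Ioo {n i : ℕ} (hi : i < n) {y : ℝ}
    (hy : y ∈ Ioo ((i : ℝ) / n) ((i + 1 / 2) / n)) : sawtooth' n y = 1 := by
  have hn : (0 : ℝ) < n := mod_cast i.zero_le.trans_lt hi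
  rw [mem_Ioo, div_lt_iff₀' hn, lt_div_iff₀' hn] at hy
  obtain ⟨hmem, hfract⟩ := mem_Icc_and_fract_of_mem_Ico hi (y := y) ⟨hy.1.le, by linarith⟩
  exact sawtooth'_eq_one_iff.2 ⟨hmem, by linarith⟩

lemma sawtooth'_eq_neg_one_of_mem_Ioo {n i : ℕ} (hi : i < n) {y : ℝ}
    (hy : y ∈ Ioo (((i : ℝ) + 1 / 2) / n) ((i + 1) / n)) : sawtooth' n y = -1 := by
  have hn : (0 : ℝ) < n := mod_cast i.zero_le.trans_lt hi
  rw [mem_Ioo, div_lt_iff₀' hn, lt_div_iff₀' hn] at hy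
  obtain ⟨hmem, hfract⟩ := mem_Icc_and_fract_of_mem_Ico hi (y := y) ⟨by linarith, hy.2⟩
  exact sawtooth'_eq_neg_one_iff.2 ⟨hmem, by linarith⟩

lemma pairwise_disjoint_Ioo_div (n : ℕ) :
    Pairwise (Function.onFun Disjoint fun i : ℕ => Ioo ((i : ℝ) / n) ((i + 1) / n)) := by
  have hmono : Monotone fun i : ℕ => (i : ℝ) / n := fun i j hij => by dsimp only; gcongr
  simpa using hmono.pairwise_disjoint_on_Ioo_succ

lemma IsTransportPlan.mul_le_planCost_sawtooth {κ : ℝ} {u ux ψ dψ φ₁ φ₂ : ℝ → ℝ} {n : ℕ}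
    (h : IsTransportPlan ux (sawtooth' n) ψ dψ φ₁ φ₂) (hκ : 0 ≤ κ) (hu : Measurable u)
    (hux : Measurable ux) (hux2 : Integrable fun x => ux x ^ 2)
    (hslope : ∀ x, ux x = 0 ∨ |ux x| = 1) {P : Finset ℝ} (hP : IsPeakSet ux P) :
    κ * π * (((n : ℝ) - P.card) / (8 * n)) ≤
      planCost κ u ux (sawtooth n) (sawtooth' n) ψ dψ φ₁ φ₂ := by
  obtain ⟨hF, hcost⟩ := h.integrable_and_planCost_eq hκ hu hux hux2 (measurable_sawtooth n)
    (measurable_sawtooth' n) (integrable_sq_sawtooth' n)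
  have hdisj : ((Finset.range n : Finset ℕ) : Set ℕ).PairwiseDisjoint
      fun i : ℕ => ψ ⁻¹' Ioo ((i : ℝ) / n) ((i + 1) / n) :=
    fun i _ j _ hij => (pairwise_disjoint_Ioo_div n hij).preimage ψ
  have htooth (i : ℕ) (hi : i ∈ Finset.range n)
      (hiP : Disjoint (ψ ⁻¹' Ioo ((i : ℝ) / n) ((i + 1) / n)) (P : Set ℝ)) :
      κ * (π / 4) * (1 / (2 * n)) ≤ ∫ x in ψ ⁻¹' Ioo ((i : ℝ) / n) ((i + 1) / n),
        planCostDensity κ u ux (sawtooth n) (sawtooth' n) ψ dψ φ₁ φ₂ x := by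
    have hin : i < n := Finset.mem_range.1 hi
    have hrise_length : ((i : ℝ) + 1 / 2) / n - i / n = 1 / (2 * n) := by ring
    have hfall_length : ((i : ℝ) + 1) / n - (i + 1 / 2) / n = 1 / (2 * n) := by ring
    have hbound := h.mul_min_le_setIntegral_tooth hκ hF hslope hP
      (show (i : ℝ) / n ≤ (i + 1 / 2) / n by gcongr; linarith)
      (show ((i : ℝ) + 1 / 2) / n ≤ (i + 1) / n by gcongr; norm_num)
      (fun _ => sawtooth'_eq_one_of_mem_Ioo hin) (fun _ => sawtooth'_eq_neg_one_of_mem_Ioo hin) hiP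
    rwa [hrise_length, hfall_length, min_self] at hbound
  calc κ * π * (((n : ℝ) - P.card) / (8 * n))
      = (((Finset.range n).card : ℝ) - P.card) * (κ * (π / 4) * (1 / (2 * n))) := by
        rw [Finset.card_range]; ring
    _ ≤ ∫ x, planCostDensity κ u ux (sawtooth n) (sawtooth' n) ψ dψ φ₁ φ₂ x :=
        card_sub_card_mul_le_integral hF (h.planCostDensity_nonneg hκ) hdisj
          (fun _ _ => h.isTransportMap.monotone.measurable measurableSet_Ioo) P
          (by positivity) htooth
    _ = _ := hcost.symm

lemma mul_le_planCost_sawtooth_sawtooth {κ : ℝ} (hκ : 0 ≤ κ) {m n : ℕ} {ψ dψ φ₁ φ₂ : ℝ → ℝ}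
    (h : IsTransportPlan (sawtooth' m) (sawtooth' n) ψ dψ φ₁ φ₂) :
    κ * π * (((n : ℝ) - m) / (8 * n)) ≤
      planCost κ (sawtooth m) (sawtooth' m) (sawtooth n) (sawtooth' n) ψ dψ φ₁ φ₂ :=
  calc κ * π * (((n : ℝ) - m) / (8 * n))
      ≤ κ * π * (((n : ℝ) - (sawtoothPeaks m).card) / (8 * n)) := by
        gcongr
        exact card_sawtoothPeaks_le m
    _ ≤ _ := h.mul_le_planCost_sawtooth hκ (measurable_sawtooth m) (measurable_sawtooth' m)
        (integrable_sq_sawtooth' m) (sawtooth'_eq_zero_or_abs_eq_one m) (isPeakSet_sawtoothPeaks m)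

lemma le_Jdist {κ c : ℝ} {u ux v vx : ℝ → ℝ}
    (hc : ∀ ψ dψ φ₁ φ₂ : ℝ → ℝ, IsTransportPlan ux vx ψ dψ φ₁ φ₂ →
      c ≤ planCost κ u ux v vx ψ dψ φ₁ φ₂) : c ≤ Jdist κ u ux v vx := by
  refine le_csInf ⟨_, id, _, 0, 0, IsTransportPlan.id_zero ux vx, rfl⟩ ?_
  rintro _ ⟨ψ, dψ, φ₁, φ₂, h, rfl⟩
  exact hc ψ dψ φ₁ φ₂ h

lemma mul_le_Jdist_sawtooth {κ : ℝ} (hκ : 0 ≤ κ) (m n : ℕ) :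
    κ * π * (((n : ℝ) - m) / (8 * n)) ≤
      Jdist κ (sawtooth m) (sawtooth' m) (sawtooth n) (sawtooth' n) :=
  le_Jdist fun _ _ _ _ => mul_le_planCost_sawtooth_sawtooth hκ

lemma tendsto_sub_div_eight_mul (m : ℕ) :
    Tendsto (fun n : ℕ => ((n : ℝ) - m) / (8 * n)) atTop (𝓝 (1 / 8)) := by
  simpa [neg_add_eq_sub] using
    tendsto_add_mul_div_add_mul_atTop_nhds (-(m : ℝ)) 0 1 (d := 8) (by norm_num)

lemma sub_div_le_mul_pi_mul {κ : ℝ} (hκ : 1 ≤ κ) {m n : ℕ} (hmn : m ≤ n) :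
    ((n : ℝ) - m) / (8 * n) ≤ κ * π * (((n : ℝ) - m) / (8 * n)) :=
  le_mul_of_one_le_left (div_nonneg (sub_nonneg.2 (mod_cast hmn)) (by positivity))
    (by nlinarith [pi_gt_three])

theorem sawtooth_not_cauchy_general (κ : ℝ) (hκ : 0 < κ) :
    (∀ m n : ℕ, 1 ≤ m → m < n → ∀ ψ dψ φ₁ φ₂ : ℝ → ℝ,
      IsTransportPlan (sawtooth' m) (sawtooth' n) ψ dψ φ₁ φ₂ →
        κ * π * (((n : ℝ) - m) / (8 * n)) ≤
          planCost κ (sawtooth m) (sawtooth' m) (sawtooth n) (sawtooth' n) ψ dψ φ₁ φ₂) ∧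
    (∀ m n : ℕ, 1 ≤ m → m < n →
      κ * π * (((n : ℝ) - m) / (8 * n)) ≤
        Jdist κ (sawtooth m) (sawtooth' m) (sawtooth n) (sawtooth' n)) ∧
    (∀ m : ℕ, 1 ≤ m →
      Tendsto (fun n : ℕ => κ * π * (((n : ℝ) - m) / (8 * n))) atTop (𝓝 (κ * π * (1 / 8)))) ∧
    ¬ (∀ ε : ℝ, 0 < ε → ∃ N : ℕ, ∀ m n : ℕ, N ≤ m → N ≤ n →
        Jdist κ (sawtooth m) (sawtooth' m) (sawtooth n) (sawtooth' n) < ε) := by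
  have hlim (m : ℕ) := (tendsto_sub_div_eight_mul m).const_mul (κ * π)
  refine ⟨fun _ _ _ _ _ _ _ _ => mul_le_planCost_sawtooth_sawtooth hκ.le,
    fun m n _ _ => mul_le_Jdist_sawtooth hκ.le m n, fun m _ => hlim m, fun hcauchy => ?_⟩
  have hκπ : 0 < κ * π := mul_pos hκ pi_pos
  obtain ⟨N, hN⟩ := hcauchy (κ * π * (1 / 16)) (by positivity)
  have hfar := (hlim N).eventually_const_lt (show κ * π * (1 / 16) < κ * π * (1 / 8) by linarith)
  obtain ⟨n, hNn, hn⟩ := ((eventually_ge_atTop N).and hfar).exists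
  exact (hN N n le_rfl hNn).not_ge (hn.le.trans (mul_le_Jdist_sawtooth hκ.le N n))

end TransportLowerBound

/-- Example 2: for `κ₀ ≥ 1` and `m < n`, every transportation plan between `u^m` and
`u^n` has cost at least `(n-m)/(8n)`; hence `J(u^m, u^n) ≥ (n-m)/(8n)`, which for fixed
`m` tends to `1/8` as `n → ∞`, so the sawtooth functions `(u^m)` do not form a Cauchy
sequence with respect to the transportation distance `J`. -/
theorem sawtooth_not_cauchy (κ : ℝ) (hκ : 1 ≤ κ) :
    (∀ m n : ℕ, 1 ≤ m → m < n → ∀ ψ dψ φ₁ φ₂ : ℝ → ℝ,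
      IsTransportPlan (sawtooth' m) (sawtooth' n) ψ dψ φ₁ φ₂ →
        ((n : ℝ) - m) / (8 * n) ≤
          planCost κ (sawtooth m) (sawtooth' m) (sawtooth n) (sawtooth' n) ψ dψ φ₁ φ₂) ∧
    (∀ m n : ℕ, 1 ≤ m → m < n →
      ((n : ℝ) - m) / (8 * n) ≤
        Jdist κ (sawtooth m) (sawtooth' m) (sawtooth n) (sawtooth' n)) ∧
    (∀ m : ℕ, 1 ≤ m →
      Filter.Tendsto (fun n : ℕ => ((n : ℝ) - m) / (8 * n)) Filter.atTop
        (nhds (1 / 8))) ∧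
    ¬ (∀ ε : ℝ, 0 < ε → ∃ N : ℕ, ∀ m n : ℕ, N ≤ m → N ≤ n →
        Jdist κ (sawtooth m) (sawtooth' m) (sawtooth n) (sawtooth' n) < ε) := by
  obtain ⟨hplan, hJ, -, hcauchy⟩ := sawtooth_not_cauchy_general κ (one_pos.trans_le hκ)
  exact ⟨fun m n hm hmn ψ dψ φ₁ φ₂ h =>
      (sub_div_le_mul_pi_mul hκ hmn.le).trans (hplan m n hm hmn ψ dψ φ₁ φ₂ h),
    fun m n hm hmn => (sub_div_le_mul_pi_mul hκ hmn.le).trans (hJ m n hm hmn),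
    fun m _ => tendsto_sub_div_eight_mul m, hcauchy⟩
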